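/- There exist absolute constants 0 < c ≤ C such that for every integer n ≥ 3, every real l ≥ 2 and every (a_1,…,a_{n−2}) ∈ ℕ^{n−2}, the set H_n = ⋃ I_{n+1}(a_1,…,a_{n+1}), where the union is over all a_{n−1}, a_n, a_{n+1} ∈ ℕ with a_{n−1}a_n ≥ l and a_n a_{n+1} ≥ l, satisfies c·|I_{n−2}(a_1,…,a_{n−2})|/l ≤ ℒ(H_n) ≤ C·|I_{n−2}(a_1,…,a_{n−2})|/l. -/

import Mathlib

/-!
Fix the prefix `a_1, …, a_m` with `m = n - 2`. The cylinder `I_m` is the image of the irrationals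
of `(0,1)` under the inverse branch `t ↦ [a_1, …, a_m + t]`, and `H_n` is the image of the fixed
set `modelSet l` of those `t` with `a_1(t) a_2(t) ≥ l` and `a_2(t) a_3(t) ≥ l`
(`cyl_eq_image`, `Hset_eq_image`). The branch is a Möbius map with derivative
`± (q_m + q_{m-1} t)⁻²`, and `q_{m-1} ≤ q_m`, so up to a factor `4` it multiplies Lebesgue measure
by the constant `q_m⁻²` (`branch_volume`). It is therefore enough to see that `modelSet l` has
measure of order `1 / l`.

For the lower bound, `modelSet l` contains the points with `a_1 = 1` and `a_2 ≥ l`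
(`le_volume_modelSet`). For the upper bound (`volume_modelSet_le`), the points with `a_2 ≥ l` have
measure at most `2 / l`. If `a_2 = c < l`, then `a_1, a_3 ≥ l / c`, and prescribing these three
conditions in turn costs the factors `2 c / l`, `1 / c²` and `c / l`, hence measure at most
`2 / l²` for each of the at most `l` values of `c`.
-/

open scoped ENNReal
open MeasureTheory Filter

/-- The Gauss map `T(x) = 1/x - ⌊1/x⌋`. -/
noncomputable def gaussMap (x : ℝ) : ℝ := 1 / x - ⌊1 / x⌋

/-- The `n`-th partial quotient `a_n(x) = ⌊1 / T^{n-1}(x)⌋` (for `n ≥ 1`). -/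
noncomputable def pq (x : ℝ) (n : ℕ) : ℕ := ⌊1 / (gaussMap^[n - 1] x)⌋₊

/-- The set `F₂(φ)` of irrational `x ∈ (0,1)` such that for infinitely many `n` there are
`1 ≤ k ≠ l ≤ n` with `a_k a_{k+1} ≥ φ(n)` and `a_l a_{l+1} ≥ φ(n)`. -/
def F2 (φ : ℕ → ℝ) : Set ℝ :=
  {x | x ∈ Set.Ioo (0 : ℝ) 1 ∧ Irrational x ∧
    {n : ℕ | ∃ k l : ℕ, 1 ≤ k ∧ k ≤ n ∧ 1 ≤ l ∧ l ≤ n ∧ k ≠ l ∧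
      φ n ≤ (pq x k : ℝ) * (pq x (k + 1) : ℝ) ∧
      φ n ≤ (pq x l : ℝ) * (pq x (l + 1) : ℝ)}.Infinite}

/-- The cylinder `I_n(a_1,…,a_n)`: irrationals in `(0,1)` whose first `n` partial quotients
are `a 1, …, a n`. -/
def cyl (n : ℕ) (a : ℕ → ℕ) : Set ℝ :=
  {x | x ∈ Set.Ioo (0 : ℝ) 1 ∧ Irrational x ∧ ∀ i : ℕ, 1 ≤ i → i ≤ n → pq x i = a i}

/-- `H_n`: the union of the cylinders `I_{n+1}(a_1,…,a_{n+1})` over all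
`a_{n-1}, a_n, a_{n+1} ∈ ℕ` with `a_{n-1} a_n ≥ l` and `a_n a_{n+1} ≥ l`. -/
def Hset (n : ℕ) (l : ℝ) (a : ℕ → ℕ) : Set ℝ :=
  ⋃ (b : ℕ) (c : ℕ) (d : ℕ) (_ : 1 ≤ b) (_ : 1 ≤ c) (_ : 1 ≤ d)
    (_ : l ≤ ((b * c : ℕ) : ℝ)) (_ : l ≤ ((c * d : ℕ) : ℝ)),
    cyl (n + 1) (Function.update (Function.update (Function.update a (n - 1) b) n c) (n + 1) d)

/-- The irrational numbers of `(0,1)`, the domain on which continued fractions are infinite. -/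
def irr01 : Set ℝ := {x | x ∈ Set.Ioo (0 : ℝ) 1 ∧ Irrational x}

/-- The inverse branch `t ↦ [a_1, …, a_m + t]` of the `m`-th iterate of the Gauss map. -/
noncomputable def branch (a : ℕ → ℕ) : ℕ → ℝ → ℝ
  | 0, t => t
  | m + 1, t => branch a m (1 / ((a (m + 1) : ℝ) + t))

/-! ### The Gauss map and its inverse branches -/

lemma inv_add_mem {a : ℕ} (ha : 1 ≤ a) {t : ℝ} (ht : t ∈ irr01) :
    1 / ((a : ℝ) + t) ∈ irr01 := by
  obtain ⟨⟨h0, h1⟩, hi⟩ := ht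
  have ha' : (1 : ℝ) ≤ a := by exact_mod_cast ha
  refine ⟨⟨by positivity, ?_⟩, ?_⟩
  · rw [div_lt_one (by linarith)]; linarith
  · rw [one_div]
    exact (hi.natCast_add a).inv

lemma floor_inv_add {a : ℕ} {t : ℝ} (ht : t ∈ irr01) :
    ⌊1 / (1 / ((a : ℝ) + t))⌋₊ = a := by
  obtain ⟨⟨h0, h1⟩, -⟩ := ht
  rw [one_div_one_div, Nat.floor_eq_iff (by positivity)]
  constructor <;> linarith

lemma gaussMap_inv_add {a : ℕ} {t : ℝ} (ht : t ∈ irr01) :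
    gaussMap (1 / ((a : ℝ) + t)) = t := by
  obtain ⟨⟨h0, h1⟩, -⟩ := ht
  have : ⌊(a : ℝ) + t⌋ = (a : ℤ) := by
    rw [Int.floor_eq_iff]; push_cast; constructor <;> linarith
  rw [gaussMap, one_div_one_div, this]; push_cast; ring

lemma one_div_eq {x : ℝ} (hx : x ∈ irr01) : 1 / x = (⌊1 / x⌋₊ : ℝ) + gaussMap x := by
  have h : (0 : ℝ) ≤ 1 / x := one_div_nonneg.2 hx.1.1.le
  rw [gaussMap, natCast_floor_eq_intCast_floor h]; ring

lemma one_le_floor {x : ℝ} (hx : x ∈ irr01) : 1 ≤ ⌊1 / x⌋₊ := by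
  rw [Nat.one_le_floor_iff]
  rw [le_div_iff₀ hx.1.1]; linarith [hx.1.2]

lemma gaussMap_mem {x : ℝ} (hx : x ∈ irr01) : gaussMap x ∈ irr01 := by
  have hi : Irrational (gaussMap x) := by
    have : Irrational (1 / x) := by rw [one_div]; exact hx.2.inv
    exact this.sub_intCast _
  refine ⟨⟨?_, Int.fract_lt_one (1 / x)⟩, hi⟩
  exact lt_of_le_of_ne (Int.fract_nonneg (1 / x)) (fun h => hi.ne_zero h.symm)

lemma iterate_mem {x : ℝ} (hx : x ∈ irr01) (m : ℕ) : gaussMap^[m] x ∈ irr01 := by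
  induction m with
  | zero => exact hx
  | succ m ih => rw [Function.iterate_succ_apply']; exact gaussMap_mem ih

lemma eq_inv_add {x : ℝ} (hx : x ∈ irr01) : 1 / ((⌊1 / x⌋₊ : ℝ) + gaussMap x) = x := by
  rw [← one_div_eq hx, one_div_one_div]

lemma pq_add (x : ℝ) (m k : ℕ) (hk : 1 ≤ k) : pq x (m + k) = pq (gaussMap^[m] x) k := by
  rw [pq, pq, ← Function.iterate_add_apply]
  congr 4; omega

lemma one_le_pq {x : ℝ} (hx : x ∈ irr01) (k : ℕ) : 1 ≤ pq x k :=
  one_le_floor (iterate_mem hx _)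

lemma branch_spec (a : ℕ → ℕ) (m : ℕ) (ha : ∀ i, 1 ≤ i → i ≤ m → 1 ≤ a i) {t : ℝ}
    (ht : t ∈ irr01) : branch a m t ∈ cyl m a ∧ gaussMap^[m] (branch a m t) = t := by
  induction m generalizing t with
  | zero => exact ⟨⟨ht.1, ht.2, fun i h1 h2 => by omega⟩, rfl⟩
  | succ m ih =>
    have hg := inv_add_mem (ha (m + 1) (by omega) le_rfl) ht
    obtain ⟨h1, h2⟩ := ih (fun i hi hi' => ha i hi (by omega)) hg
    refine ⟨⟨h1.1, h1.2.1, fun i hi hi' => ?_⟩, ?_⟩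
    · rcases Nat.lt_or_ge m i with h | h
      · obtain rfl : i = m + 1 := by omega
        rw [pq, Nat.add_sub_cancel, branch, h2, floor_inv_add ht]
      · exact h1.2.2 i hi h
    · rw [Function.iterate_succ_apply', branch, h2, gaussMap_inv_add ht]

lemma branch_iterate (a : ℕ → ℕ) (m : ℕ) {x : ℝ} (hx : x ∈ cyl m a) :
    branch a m (gaussMap^[m] x) = x := by
  induction m with
  | zero => rfl
  | succ m ih =>
    have hx' : x ∈ irr01 := ⟨hx.1, hx.2.1⟩
    have hp := hx.2.2 (m + 1) (by omega) le_rfl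
    rw [pq, Nat.add_sub_cancel] at hp
    rw [branch, Function.iterate_succ_apply', ← hp, eq_inv_add (iterate_mem hx' m)]
    exact ih ⟨hx.1, hx.2.1, fun i h1 h2 => hx.2.2 i h1 (by omega)⟩

/-! ### Bounded distortion -/

/-- The branch with convergent denominators `q = q_m` and `r = q_{m-1}` is a Möbius map of
determinant `±1` and denominator `q + r t`. -/
lemma branch_dist (a : ℕ → ℕ) (m : ℕ) (ha : ∀ i, 1 ≤ i → i ≤ m → 1 ≤ a i) :
    ∃ q r : ℝ, 0 < q ∧ 0 ≤ r ∧ r ≤ q ∧ ∀ x ∈ irr01, ∀ y ∈ irr01,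
      |branch a m x - branch a m y| * ((q + r * x) * (q + r * y)) = |x - y| := by
  induction m with
  | zero => exact ⟨1, 0, one_pos, le_rfl, zero_le_one, fun x _ y _ => by simp [branch]⟩
  | succ m ih =>
    obtain ⟨q, r, hq, hr, hrq, h⟩ := ih (fun i hi hi' => ha i hi (by omega))
    have ha1 := ha (m + 1) (by omega) le_rfl
    have ha' : (1 : ℝ) ≤ a (m + 1) := by exact_mod_cast ha1
    refine ⟨q * a (m + 1) + r, q, by positivity, hq.le, by nlinarith, fun x hx y hy => ?_⟩
    have := h _ (inv_add_mem ha1 hx) _ (inv_add_mem ha1 hy)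
    have hx0 : 0 < (a (m + 1) : ℝ) + x := by linarith [hx.1.1]
    have hy0 : 0 < (a (m + 1) : ℝ) + y := by linarith [hy.1.1]
    have e : |1 / ((a (m + 1) : ℝ) + x) - 1 / ((a (m + 1) : ℝ) + y)|
        * (((a (m + 1) : ℝ) + x) * ((a (m + 1) : ℝ) + y)) = |x - y| := by
      rw [← abs_of_pos (mul_pos hx0 hy0), ← abs_mul, abs_sub_comm x y]
      congr 1
      field_simp
      ring
    rw [← e, ← this, branch, branch]
    field_simp
    ring

lemma volume_image_le {f : ℝ → ℝ} {s : Set ℝ} {K : ℝ} (hK : 0 ≤ K)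
    (h : ∀ x ∈ s, ∀ y ∈ s, |f x - f y| ≤ K * |x - y|) :
    volume (f '' s) ≤ ENNReal.ofReal K * volume s := by
  have hL : LipschitzOnWith K.toNNReal f s := by
    refine LipschitzOnWith.of_dist_le_mul fun x hx y hy => ?_
    rw [Real.dist_eq, Real.dist_eq, Real.coe_toNNReal _ hK]
    exact h x hx y hy
  have := hL.hausdorffMeasure_image_le (d := 1) zero_le_one
  rwa [hausdorffMeasure_real, ENNReal.rpow_one] at this

/-- Up to the factor `4`, a branch scales Lebesgue measure by the constant `K = q_m⁻²`. -/
lemma branch_volume (a : ℕ → ℕ) (m : ℕ) (ha : ∀ i, 1 ≤ i → i ≤ m → 1 ≤ a i) :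
    ∃ K : ℝ, 0 < K ∧ ∀ E ⊆ irr01,
      volume (branch a m '' E) ≤ ENNReal.ofReal K * volume E ∧
      ENNReal.ofReal K * volume E ≤ 4 * volume (branch a m '' E) := by
  obtain ⟨q, r, hq, hr, hrq, h⟩ := branch_dist a m ha
  refine ⟨1 / q ^ 2, by positivity, fun E hE => ⟨?_, ?_⟩⟩
  · refine volume_image_le (by positivity) fun x hx y hy => ?_
    have e := h x (hE hx) y (hE hy)
    have hx0 := (hE hx).1.1
    have hy0 := (hE hy).1.1
    rw [← e, one_div, inv_mul_eq_div, le_div_iff₀ (by positivity)]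
    gcongr
    have : 0 ≤ r * x := by positivity
    have : 0 ≤ r * y := by positivity
    nlinarith
  · have hinv : E = gaussMap^[m] '' (branch a m '' E) := by
      rw [Set.image_image]
      exact ((Set.image_congr fun t ht => (branch_spec a m ha (hE ht)).2).trans
        (Set.image_id' E)).symm
    have key : volume E ≤ ENNReal.ofReal (4 * q ^ 2) * volume (branch a m '' E) := by
      conv_lhs => rw [hinv]
      refine volume_image_le (by positivity) ?_
      rintro _ ⟨x, hx, rfl⟩ _ ⟨y, hy, rfl⟩
      rw [(branch_spec a m ha (hE hx)).2, (branch_spec a m ha (hE hy)).2,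
        ← h x (hE hx) y (hE hy), mul_comm]
      refine mul_le_mul_of_nonneg_right ?_ (abs_nonneg _)
      have hx1 := (hE hx).1
      have hy1 := (hE hy).1
      have h1 : q + r * x ≤ 2 * q := by nlinarith [hx1.1, hx1.2]
      have h2 : q + r * y ≤ 2 * q := by nlinarith [hy1.1, hy1.2]
      have h3 : 0 ≤ q + r * y := by nlinarith [hy1.1, hy1.2]
      calc (q + r * x) * (q + r * y) ≤ (2 * q) * (2 * q) := by gcongr
        _ = 4 * q ^ 2 := by ring
    calc ENNReal.ofReal (1 / q ^ 2) * volume E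
        ≤ ENNReal.ofReal (1 / q ^ 2) * (ENNReal.ofReal (4 * q ^ 2) * volume (branch a m '' E)) := by
          gcongr
      _ = 4 * volume (branch a m '' E) := by
          rw [← mul_assoc, ← ENNReal.ofReal_mul (by positivity)]
          congr 1
          rw [show 1 / q ^ 2 * (4 * q ^ 2) = 4 by field_simp]
          simp

/-! ### The model set in the unit interval -/

lemma volume_irr01 : volume irr01 = 1 := by
  have : irr01 = Set.Ioo (0 : ℝ) 1 \ Set.range ((↑) : ℚ → ℝ) := by
    ext x; simp only [irr01, Irrational, Set.mem_ofPred_eq, Set.mem_sdiff]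
  rw [this, measure_sdiff_null ((Set.countable_range _).measure_zero _)]
  simp

lemma volume_large_le {D : ℝ} (hD : 0 < D) :
    volume {t | t ∈ irr01 ∧ D ≤ (⌊1 / t⌋₊ : ℝ)} ≤ ENNReal.ofReal (1 / D) := by
  calc _ ≤ volume (Set.Icc (0 : ℝ) (1 / D)) := by
        refine measure_mono fun t ht => ⟨ht.1.1.1.le, ?_⟩
        have h1 : D ≤ 1 / t := ht.2.trans (Nat.floor_le (one_div_nonneg.2 ht.1.1.1.le))
        rw [le_div_iff₀ ht.1.1.1] at h1
        rw [le_div_iff₀ hD]; linarith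
    _ = _ := by rw [Real.volume_Icc, sub_zero]

lemma le_volume_large {D : ℝ} (hD : 1 ≤ D) :
    ENNReal.ofReal (1 / (2 * D)) ≤ volume {t | t ∈ irr01 ∧ D ≤ (⌊1 / t⌋₊ : ℝ)} := by
  calc ENNReal.ofReal (1 / (2 * D)) = volume (Set.Ioo (0 : ℝ) (1 / (2 * D))) := by
        rw [Real.volume_Ioo, sub_zero]
    _ = volume (Set.Ioo (0 : ℝ) (1 / (2 * D)) \ Set.range ((↑) : ℚ → ℝ)) :=
        (measure_sdiff_null ((Set.countable_range _).measure_zero _)).symm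
    _ ≤ _ := by
        refine measure_mono fun t ht => ?_
        obtain ⟨⟨h0, h1⟩, hi⟩ := ht
        rw [lt_div_iff₀ (by linarith)] at h1
        refine ⟨⟨⟨h0, by nlinarith⟩, hi⟩, ?_⟩
        have h2 : 2 * D < 1 / t := by rw [lt_div_iff₀ h0]; linarith
        have h3 := Nat.lt_floor_add_one (1 / t)
        linarith

lemma volume_digit_le {c : ℕ} (hc : 1 ≤ c) {E : Set ℝ} (hE : E ⊆ irr01) :
    volume {t | t ∈ irr01 ∧ ⌊1 / t⌋₊ = c ∧ gaussMap t ∈ E}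
      ≤ ENNReal.ofReal (1 / (c : ℝ) ^ 2) * volume E := by
  have hc' : (1 : ℝ) ≤ c := by exact_mod_cast hc
  refine (measure_mono ?_).trans (volume_image_le (f := fun t => 1 / ((c : ℝ) + t)) (s := E)
    (by positivity) fun x hx y hy => ?_)
  · rintro t ⟨ht, rfl, h⟩
    exact ⟨_, h, eq_inv_add ht⟩
  · have hx0 := (hE hx).1.1
    have hy0 := (hE hy).1.1
    have e : 1 / ((c : ℝ) + x) - 1 / ((c : ℝ) + y) = (y - x) / (((c : ℝ) + x) * ((c : ℝ) + y)) := by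
      field_simp; ring
    rw [e, abs_div, abs_sub_comm, abs_of_pos (by positivity : 0 < ((c : ℝ) + x) * ((c : ℝ) + y)),
      div_eq_mul_one_div, mul_comm]
    gcongr
    nlinarith

lemma tsum_tail_le {N : ℕ} (hN : 1 ≤ N) :
    ∑' k : ℕ, ENNReal.ofReal (1 / ((N + k : ℕ) : ℝ) ^ 2) ≤ ENNReal.ofReal (2 / N) := by
  refine ENNReal.tsum_le_of_sum_range_le fun n => ?_
  rw [← ENNReal.ofReal_sum_of_nonneg (fun _ _ => by positivity)]
  refine ENNReal.ofReal_le_ofReal ?_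
  have hN' : (1 : ℝ) ≤ N := by exact_mod_cast hN
  have : ∑ k ∈ Finset.range n, 1 / ((N + k : ℕ) : ℝ) ^ 2 ≤ 2 / N - 2 / ((N + n : ℕ) : ℝ) := by
    induction n with
    | zero => simp
    | succ n ih =>
      rw [Finset.sum_range_succ]
      have hs : (1 : ℝ) ≤ (N + n : ℕ) := by exact_mod_cast (by omega : 1 ≤ N + n)
      have e : ((N + (n + 1) : ℕ) : ℝ) = ((N + n : ℕ) : ℝ) + 1 := by push_cast; ring
      rw [e]
      generalize ((N + n : ℕ) : ℝ) = s at *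
      have : 1 / s ^ 2 ≤ 2 / s - 2 / (s + 1) := by
        rw [div_sub_div _ _ (by positivity) (by positivity),
          div_le_div_iff₀ (by positivity) (by positivity)]
        nlinarith
      linarith
  have : (0 : ℝ) ≤ 2 / ((N + n : ℕ) : ℝ) := by positivity
  linarith

lemma volume_large_digit_le {B : ℝ} (hB : 0 < B) {E : Set ℝ} (hE : E ⊆ irr01) :
    volume {t | t ∈ irr01 ∧ B ≤ (⌊1 / t⌋₊ : ℝ) ∧ gaussMap t ∈ E}
      ≤ ENNReal.ofReal (2 / B) * volume E := by
  have hN : 1 ≤ ⌈B⌉₊ := Nat.one_le_ceil_iff.2 hB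
  calc _ ≤ volume (⋃ k : ℕ, {t | t ∈ irr01 ∧ ⌊1 / t⌋₊ = ⌈B⌉₊ + k ∧ gaussMap t ∈ E}) := by
        refine measure_mono fun t ht => Set.mem_iUnion.2 ?_
        obtain ⟨k, hk⟩ := Nat.exists_eq_add_of_le (Nat.ceil_le.2 ht.2.1)
        exact ⟨k, ht.1, hk, ht.2.2⟩
    _ ≤ ∑' k : ℕ, ENNReal.ofReal (1 / ((⌈B⌉₊ + k : ℕ) : ℝ) ^ 2) * volume E :=
        (measure_iUnion_le _).trans
          (ENNReal.tsum_le_tsum fun k => volume_digit_le (by omega) hE)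
    _ ≤ ENNReal.ofReal (2 / ⌈B⌉₊) * volume E := by
        rw [ENNReal.tsum_mul_right]
        gcongr
        exact tsum_tail_le hN
    _ ≤ _ := by
        gcongr
        exact Nat.le_ceil B

/-- The set `H_n` seen through the branch of the prefix `a_1, …, a_{n-2}`: the conditions on
`a_{n-1}, a_n, a_{n+1}` become conditions on the first three partial quotients. -/
def modelSet (l : ℝ) : Set ℝ :=
  {t | t ∈ irr01 ∧ l ≤ ((pq t 1 * pq t 2 : ℕ) : ℝ) ∧ l ≤ ((pq t 2 * pq t 3 : ℕ) : ℝ)}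

/-- Points with `a_2 = c < l` need `a_1, a_3 ≥ l / c`, which has measure `O(l⁻²)` for each of the
at most `l` values of `c`; the points with `a_2 ≥ l` have measure `O(l⁻¹)`. -/
lemma volume_modelSet_le {l : ℝ} (hl : 2 ≤ l) :
    volume (modelSet l) ≤ ENNReal.ofReal (4 / l) := by
  have hl0 : 0 < l := by linarith
  set L : ℝ → Set ℝ := fun D => {t | t ∈ irr01 ∧ D ≤ (⌊1 / t⌋₊ : ℝ)} with hL
  set M : ℕ → Set ℝ := fun c => {t | t ∈ irr01 ∧ ⌊1 / t⌋₊ = c ∧ gaussMap t ∈ L (l / c)} with hM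
  set A : ℝ → Set ℝ → Set ℝ := fun B E =>
    {t | t ∈ irr01 ∧ B ≤ (⌊1 / t⌋₊ : ℝ) ∧ gaussMap t ∈ E} with hA
  have hsub : modelSet l ⊆ A 1 (L l) ∪ ⋃ c ∈ Finset.Icc 1 ⌊l⌋₊, A (l / c) (M c) := by
    rintro t ⟨ht, h12, h23⟩
    have hp1 := one_le_pq ht 1
    have hp2 := one_le_pq ht 2
    have e1 : pq t 1 = ⌊1 / t⌋₊ := rfl
    have e2 : pq t 2 = ⌊1 / gaussMap t⌋₊ := rfl
    have e3 : pq t 3 = ⌊1 / gaussMap (gaussMap t)⌋₊ := rfl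
    have hc0 : (0 : ℝ) < pq t 2 := by exact_mod_cast hp2
    push_cast at h12 h23
    rcases le_or_gt l (pq t 2) with h | h
    · left
      refine ⟨ht, ?_, gaussMap_mem ht, by rwa [← e2]⟩
      rw [← e1]; exact_mod_cast hp1
    · right
      refine Set.mem_biUnion (x := pq t 2) ?_ ⟨ht, ?_, gaussMap_mem ht, e2.symm,
        gaussMap_mem (gaussMap_mem ht), ?_⟩
      · exact Finset.mem_coe.2 (Finset.mem_Icc.2 ⟨hp2, Nat.le_floor h.le⟩)
      · rw [← e1, div_le_iff₀ hc0]; exact h12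
      · rw [← e3, div_le_iff₀ hc0]; linarith
  have hlarge : volume (A 1 (L l)) ≤ ENNReal.ofReal (2 / l) := by
    refine (volume_large_digit_le one_pos fun t ht => ht.1).trans ?_
    calc _ ≤ ENNReal.ofReal (2 / 1) * ENNReal.ofReal (1 / l) := by
          gcongr; exact volume_large_le hl0
      _ = _ := by rw [← ENNReal.ofReal_mul (by norm_num)]; congr 1; ring
  have hsmall : ∀ c ∈ Finset.Icc 1 ⌊l⌋₊,
      volume (A (l / c) (M c)) ≤ ENNReal.ofReal (2 / l ^ 2) := by
    intro c hc
    have hc1 := (Finset.mem_Icc.1 hc).1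
    have hc0 : (0 : ℝ) < c := by exact_mod_cast hc1
    have hlc : 0 < l / c := by positivity
    refine (volume_large_digit_le hlc fun t ht => ht.1).trans ?_
    calc _ ≤ ENNReal.ofReal (2 / (l / c)) *
            (ENNReal.ofReal (1 / (c : ℝ) ^ 2) * ENNReal.ofReal (1 / (l / c))) := by
          gcongr
          refine (volume_digit_le hc1 fun t ht => ht.1).trans ?_
          gcongr
          exact volume_large_le hlc
      _ = _ := by
          rw [← ENNReal.ofReal_mul (by positivity), ← ENNReal.ofReal_mul (by positivity)]
          congr 1
          field_simp
  calc volume (modelSet l)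
      ≤ volume (A 1 (L l)) + ∑ c ∈ Finset.Icc 1 ⌊l⌋₊, volume (A (l / c) (M c)) :=
        (measure_mono hsub).trans ((measure_union_le _ _).trans
          (add_le_add le_rfl (measure_biUnion_finset_le _ _)))
    _ ≤ ENNReal.ofReal (2 / l) + ∑ c ∈ Finset.Icc 1 ⌊l⌋₊, ENNReal.ofReal (2 / l ^ 2) :=
        add_le_add hlarge (Finset.sum_le_sum hsmall)
    _ = ENNReal.ofReal (2 / l + ⌊l⌋₊ * (2 / l ^ 2)) := by
        rw [Finset.sum_const, Nat.card_Icc, Nat.add_sub_cancel, nsmul_eq_mul,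
          ENNReal.ofReal_add (by positivity) (by positivity), ENNReal.ofReal_mul (by positivity),
          ENNReal.ofReal_natCast]
    _ ≤ ENNReal.ofReal (4 / l) := by
        refine ENNReal.ofReal_le_ofReal ?_
        calc 2 / l + ⌊l⌋₊ * (2 / l ^ 2) ≤ 2 / l + l * (2 / l ^ 2) := by
              gcongr; exact Nat.floor_le hl0.le
          _ = 4 / l := by field_simp; norm_num

/-- The model set contains every point with `a_1 = 1` and `a_2 ≥ l`. -/
lemma le_volume_modelSet {l : ℝ} (hl : 2 ≤ l) :
    ENNReal.ofReal (1 / (8 * l)) ≤ volume (modelSet l) := by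
  have hl0 : 0 < l := by linarith
  set E : Set ℝ := {t | t ∈ irr01 ∧ l ≤ (⌊1 / t⌋₊ : ℝ)} with hE
  have hsub : (fun t : ℝ => 1 / ((1 : ℕ) + t)) '' E ⊆ modelSet l := by
    rintro _ ⟨t, ⟨ht, hlt⟩, rfl⟩
    have hm := inv_add_mem le_rfl ht
    have e2 : pq (1 / (((1 : ℕ) : ℝ) + t)) 2 = ⌊1 / t⌋₊ := by
      change ⌊1 / gaussMap (1 / (((1 : ℕ) : ℝ) + t))⌋₊ = _
      rw [gaussMap_inv_add ht]
    refine ⟨hm, hlt.trans ?_, hlt.trans ?_⟩ <;> rw [e2] <;> refine Nat.cast_le.2 ?_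
    · exact Nat.le_mul_of_pos_left _ (one_le_pq hm 1)
    · exact Nat.le_mul_of_pos_right _ (one_le_pq hm 3)
  have h4 : volume E ≤ ENNReal.ofReal 4 * volume (modelSet l) := by
    have hinv : E = gaussMap '' ((fun t : ℝ => 1 / ((1 : ℕ) + t)) '' E) := by
      rw [Set.image_image]
      exact ((Set.image_congr fun t ht => gaussMap_inv_add ht.1).trans (Set.image_id' E)).symm
    calc volume E = volume (gaussMap '' ((fun t : ℝ => 1 / ((1 : ℕ) + t)) '' E)) := by rw [← hinv]
      _ ≤ ENNReal.ofReal 4 * volume ((fun t : ℝ => 1 / ((1 : ℕ) + t)) '' E) := by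
          refine volume_image_le (by norm_num) ?_
          rintro _ ⟨x, hx, rfl⟩ _ ⟨y, hy, rfl⟩
          simp only
          rw [gaussMap_inv_add hx.1, gaussMap_inv_add hy.1]
          obtain ⟨hx0, hx1⟩ := hx.1.1
          obtain ⟨hy0, hy1⟩ := hy.1.1
          have e : 1 / (((1 : ℕ) : ℝ) + x) - 1 / (((1 : ℕ) : ℝ) + y)
              = (y - x) / ((1 + x) * (1 + y)) := by
            push_cast; field_simp; ring
          rw [e, abs_div, abs_sub_comm y, abs_of_pos (by positivity : 0 < (1 + x) * (1 + y)),
            ← mul_div_assoc, le_div_iff₀ (by positivity), mul_comm]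
          gcongr
          nlinarith
      _ ≤ _ := by gcongr
  have h5 := (le_volume_large (by linarith : 1 ≤ l)).trans h4
  calc ENNReal.ofReal (1 / (8 * l)) = ENNReal.ofReal (1 / 4) * ENNReal.ofReal (1 / (2 * l)) := by
        rw [← ENNReal.ofReal_mul (by norm_num)]; congr 1; field_simp; norm_num
    _ ≤ ENNReal.ofReal (1 / 4) * (ENNReal.ofReal 4 * volume (modelSet l)) := by gcongr
    _ = volume (modelSet l) := by
        rw [← mul_assoc, ← ENNReal.ofReal_mul (by norm_num)]; norm_num

/-! ### Transport to an arbitrary cylinder -/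

lemma cyl_eq_image (a : ℕ → ℕ) (m : ℕ) (ha : ∀ i, 1 ≤ i → i ≤ m → 1 ≤ a i) :
    cyl m a = branch a m '' irr01 := by
  ext x
  constructor
  · exact fun hx => ⟨_, iterate_mem ⟨hx.1, hx.2.1⟩ m, branch_iterate a m hx⟩
  · rintro ⟨t, ht, rfl⟩
    exact (branch_spec a m ha ht).1

lemma Hset_eq_image (a : ℕ → ℕ) (m : ℕ) (l : ℝ) (ha : ∀ i, 1 ≤ i → i ≤ m → 1 ≤ a i) :
    Hset (m + 2) l a = branch a m '' modelSet l := by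
  ext x
  simp only [Hset, Set.mem_iUnion, exists_prop]
  constructor
  · rintro ⟨b, c, d, -, -, -, hbc, hcd, h0, hi, hx⟩
    have hx' : x ∈ irr01 := ⟨h0, hi⟩
    have hcyl : x ∈ cyl m a := ⟨h0, hi, fun i h1 h2 => by
      rw [hx i h1 (by omega), Function.update_of_ne (by omega), Function.update_of_ne (by omega),
        Function.update_of_ne (by omega)]⟩
    have e1 := hx (m + 1) (by omega) (by omega)
    have e2 := hx (m + 2) (by omega) (by omega)
    have e3 := hx (m + 3) (by omega) (by omega)
    rw [Function.update_of_ne (by omega), Function.update_of_ne (by omega),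
      show m + 2 - 1 = m + 1 by omega, Function.update_self, pq_add _ _ _ (by omega)] at e1
    rw [Function.update_of_ne (by omega), Function.update_self, pq_add _ _ _ (by omega)] at e2
    rw [show m + 2 + 1 = m + 3 by omega, Function.update_self, pq_add _ _ _ (by omega)] at e3
    exact ⟨_, ⟨iterate_mem hx' m, by rwa [e1, e2], by rwa [e2, e3]⟩, branch_iterate a m hcyl⟩
  · rintro ⟨t, ⟨ht, h12, h23⟩, rfl⟩
    obtain ⟨h1, h2⟩ := branch_spec a m ha ht
    refine ⟨pq t 1, pq t 2, pq t 3, one_le_pq ht 1, one_le_pq ht 2, one_le_pq ht 3, h12, h23,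
      h1.1, h1.2.1, fun i hi1 hi2 => ?_⟩
    have hcases : i ≤ m ∨ i = m + 1 ∨ i = m + 2 ∨ i = m + 3 := by omega
    rcases hcases with h | rfl | rfl | rfl
    · rw [h1.2.2 i hi1 h, Function.update_of_ne (by omega), Function.update_of_ne (by omega),
        Function.update_of_ne (by omega)]
    · rw [Function.update_of_ne (by omega), Function.update_of_ne (by omega),
        show m + 2 - 1 = m + 1 by omega, Function.update_self, pq_add _ _ _ (by omega), h2]
    · rw [Function.update_of_ne (by omega), Function.update_self, pq_add _ _ _ (by omega), h2]
    · rw [show m + 2 + 1 = m + 3 by omega, Function.update_self, pq_add _ _ _ (by omega), h2]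

theorem measure_Hset_asymp : ∃ c C : ℝ, 0 < c ∧ c ≤ C ∧
    ∀ n : ℕ, 3 ≤ n → ∀ l : ℝ, 2 ≤ l → ∀ a : ℕ → ℕ,
      (∀ i : ℕ, 1 ≤ i → i ≤ n - 2 → 1 ≤ a i) →
      ENNReal.ofReal c * volume (cyl (n - 2) a) / ENNReal.ofReal l ≤ volume (Hset n l a) ∧
      volume (Hset n l a) ≤ ENNReal.ofReal C * volume (cyl (n - 2) a) / ENNReal.ofReal l := by
  refine ⟨1 / 32, 16, by norm_num, by norm_num, fun n hn l hl a ha => ?_⟩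
  obtain ⟨m, rfl⟩ : ∃ m, n = m + 2 := ⟨n - 2, by omega⟩
  rw [Nat.add_sub_cancel] at ha ⊢
  have hl0 : 0 < l := by linarith
  obtain ⟨K, hK, hvol⟩ := branch_volume a m ha
  obtain ⟨hc1, hc2⟩ := hvol irr01 subset_rfl
  obtain ⟨hh1, hh2⟩ := hvol (modelSet l) fun t ht => ht.1
  rw [← cyl_eq_image a m ha, volume_irr01, mul_one] at hc1 hc2
  rw [← Hset_eq_image a m l ha] at hh1 hh2
  have hdiv : ∀ (r : ℝ) (v : ℝ≥0∞), 0 ≤ r →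
      ENNReal.ofReal r * v / ENNReal.ofReal l = ENNReal.ofReal (r / l) * v := by
    intro r v hr
    rw [ENNReal.ofReal_div_of_pos hl0, div_eq_mul_inv, div_eq_mul_inv]
    ring
  constructor
  · rw [hdiv _ _ (by norm_num)]
    calc ENNReal.ofReal (1 / 32 / l) * volume (cyl m a)
        ≤ ENNReal.ofReal (1 / 32 / l) * ENNReal.ofReal K := by gcongr
      _ = ENNReal.ofReal (1 / 4) * (ENNReal.ofReal K * ENNReal.ofReal (1 / (8 * l))) := by
          rw [← ENNReal.ofReal_mul (by positivity), ← ENNReal.ofReal_mul (by positivity),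
            ← ENNReal.ofReal_mul (by positivity)]
          congr 1; field_simp; norm_num
      _ ≤ ENNReal.ofReal (1 / 4) * (4 * volume (Hset (m + 2) l a)) := by
          refine mul_le_mul_right (le_trans ?_ hh2) _
          gcongr
          exact le_volume_modelSet hl
      _ = volume (Hset (m + 2) l a) := by
          rw [← mul_assoc, show (4 : ℝ≥0∞) = ENNReal.ofReal 4 by simp,
            ← ENNReal.ofReal_mul (by norm_num)]
          norm_num
  · rw [hdiv _ _ (by norm_num)]
    calc volume (Hset (m + 2) l a) ≤ ENNReal.ofReal K * volume (modelSet l) := hh1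
      _ ≤ (4 * volume (cyl m a)) * ENNReal.ofReal (4 / l) := by
          gcongr
          exact volume_modelSet_le hl
      _ = ENNReal.ofReal (16 / l) * volume (cyl m a) := by
          rw [show 16 / l = 4 * (4 / l) by ring, ENNReal.ofReal_mul (by norm_num)]
          simp only [ENNReal.ofReal_ofNat]
          ring
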